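/- arXiv:2512.15425 — 2 statements merged into one kernel-verified Lean document; each statement's English description precedes it below -/
import Mathlib

section
/- Let L be a positive integer and c > 0 a real number. Then ∫₀^∞ Q(√(2·c·t)) · t^{L−1} · e^{−t} / (L−1)! dt = 1/2 − (1/2)·√(c/(1+c)) · Σ_{i=0}^{L−1} C(2i, i) / (4(1+c))^i, where C(2i, i) is the central binomial coefficient. -/
/-- The Gaussian tail function `Q(x) = ∫_x^∞ (1/√(2π)) e^{−u²/2} du`. -/
noncomputable def gaussQ (x : ℝ) : ℝ :=
  ∫ u in Set.Ioi x, (1 / Real.sqrt (2 * Real.pi)) * Real.exp (-u ^ 2 / 2)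

/-!
The survival function of the Gamma law of shape `n + 1`, namely `e^{-t} ∑_{i ≤ n} t^i / i!`, is
minus an antiderivative of its density. A single integration by parts therefore turns the average of
`Q(√(2ct))` into `Q(0) = 1/2` plus the integral of
`d/dt Q(√(2ct)) = -√(c/π)/2 · t^{-1/2} e^{-ct}` against that finite sum. Each summand is a Gamma
integral proportional to `Γ(i + 1/2) / (i! (1 + c)^{i + 1/2})`, and Legendre's duplication formula
at `i + 1/2` supplies the central binomial coefficient.
-/

open Real Set Filter Topology MeasureTheory ProbabilityTheory
open scoped Nat

theorem hasDerivAt_integral_Ioi {E : Type*} [NormedAddCommGroup E] [NormedSpace ℝ E]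
    [CompleteSpace E] {f : ℝ → E} {x : ℝ} (hf : Integrable f) (hx : ContinuousAt f x) :
    HasDerivAt (fun y => ∫ u in Ioi y, f u) (-f x) x := by
  have h_split (y : ℝ) : ∫ u in Ioi y, f u = (∫ u in Ioi x, f u) - ∫ u in x..y, f u := by
    rw [← intervalIntegral.integral_Ioi_sub_Ioi' hf.integrableOn hf.integrableOn, sub_sub_cancel]
  have h_ftc : HasDerivAt (fun y => ∫ u in x..y, f u) (f x) x :=
    intervalIntegral.integral_hasDerivAt_right hf.intervalIntegrable
      hf.aestronglyMeasurable.stronglyMeasurableAtFilter hx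
  rw [funext h_split]
  exact h_ftc.const_sub _

theorem integrableOn_rpow_mul_exp_neg_mul_Ioi {s r : ℝ} (hs : 0 < s) (hr : 0 < r) :
    IntegrableOn (fun t : ℝ => t ^ (s - 1) * exp (-(r * t))) (Ioi 0) := by
  simpa only [rpow_one, neg_mul] using
    integrableOn_rpow_mul_exp_neg_mul_rpow (s := s - 1) (by linarith) one_pos hr

theorem Gamma_half_add_nat_div_factorial (n : ℕ) :
    Gamma (1 / 2 + n) / n ! = √π * n.centralBinom / 4 ^ n := by
  have h_four : (2 : ℝ) ^ (1 - 2 * (1 / 2 + n) : ℝ) = (4 ^ n)⁻¹ := by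
    rw [show (1 - 2 * (1 / 2 + n) : ℝ) = -(2 * n : ℕ) by push_cast; ring, rpow_neg zero_le_two,
      rpow_natCast, pow_mul]
    norm_num
  have h_dup : Gamma (1 / 2 + n) * n ! = (2 * n)! * (4 ^ n)⁻¹ * √π := by
    have h_legendre := Gamma_mul_Gamma_add_half (1 / 2 + n)
    rwa [h_four, show (1 / 2 + n + 1 / 2 : ℝ) = n + 1 by ring,
      show (2 * (1 / 2 + n) : ℝ) = (2 * n : ℕ) + 1 by push_cast; ring,
      Gamma_nat_eq_factorial, Gamma_nat_eq_factorial] at h_legendre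
  have h_choose : (n.centralBinom : ℝ) * n ! * n ! = (2 * n)! := by
    rw [Nat.centralBinom_eq_two_mul_choose]
    exact_mod_cast two_mul n ▸ Nat.add_choose_mul_factorial_mul_factorial n n
  have h_fact : (n ! : ℝ) ≠ 0 := by positivity
  rw [div_eq_iff h_fact]
  apply mul_right_cancel₀ h_fact
  rw [h_dup, ← h_choose]
  ring

theorem rpow_half_add_nat_mul_Gamma_div_factorial {r : ℝ} (hr : 0 < r) (i : ℕ) :
    (1 / r) ^ (1 / 2 + i : ℝ) * Gamma (1 / 2 + i) / i ! =
      √(π / r) * (((2 * i).choose i : ℝ) / (4 * r) ^ i) := by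
  rw [mul_div_assoc, Gamma_half_add_nat_div_factorial, Nat.centralBinom_eq_two_mul_choose,
    rpow_add_natCast (by positivity), ← sqrt_eq_rpow, div_eq_mul_one_div π, sqrt_mul pi_nonneg,
    mul_pow, one_div_pow]
  field_simp

section GaussianTail

theorem gaussQ_eq_integral_gaussianPDFReal (x : ℝ) :
    gaussQ x = ∫ u in Ioi x, gaussianPDFReal 0 1 u := by
  simp only [gaussQ, gaussianPDFReal, one_div, NNReal.coe_one, mul_one, sub_zero]

theorem gaussQ_eq_measureReal (x : ℝ) : gaussQ x = (gaussianReal 0 1).real (Ioi x) := by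
  rw [gaussQ_eq_integral_gaussianPDFReal, measureReal_def,
    gaussianReal_apply_eq_integral 0 one_ne_zero, ENNReal.toReal_ofReal]
  exact integral_nonneg (gaussianPDFReal_nonneg 0 1)

theorem abs_gaussQ_le_one (x : ℝ) : |gaussQ x| ≤ 1 := by
  rw [gaussQ_eq_measureReal, abs_of_nonneg measureReal_nonneg]
  exact measureReal_le_one

theorem gaussQ_zero : gaussQ 0 = 1 / 2 := by
  have h_gauss : ∫ u in Ioi (0 : ℝ), exp (-u ^ 2 / 2) = √(2 * π) / 2 := by
    convert integral_gaussian_Ioi (1 / 2) using 4 <;> ring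
  rw [gaussQ, integral_const_mul, h_gauss]
  field_simp

theorem hasDerivAt_gaussQ (x : ℝ) : HasDerivAt gaussQ (-gaussianPDFReal 0 1 x) x := by
  have h_cont : Continuous (gaussianPDFReal 0 1) := by
    unfold gaussianPDFReal
    fun_prop
  rw [funext gaussQ_eq_integral_gaussianPDFReal]
  exact hasDerivAt_integral_Ioi (integrable_gaussianPDFReal 0 1) h_cont.continuousAt

theorem continuous_gaussQ : Continuous gaussQ :=
  continuous_iff_continuousAt.2 fun x => (hasDerivAt_gaussQ x).continuousAt

theorem hasDerivAt_gaussQ_sqrt {c t : ℝ} (hc : 0 < c) (ht : 0 < t) :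
    HasDerivAt (fun t => gaussQ √(2 * c * t))
      (-(√(c / π) / 2) * (t ^ (1 / 2 - 1 : ℝ) * exp (-(c * t)))) t := by
  have h_sqrt : HasDerivAt (fun t => √(2 * c * t)) (2 * c / (2 * √(2 * c * t))) t :=
    (hasDerivAt_const_mul (2 * c)).sqrt (by positivity)
  refine ((hasDerivAt_gaussQ _).comp t h_sqrt).congr_deriv ?_
  have h_pdf : gaussianPDFReal 0 1 √(2 * c * t) = (√2 * √π)⁻¹ * exp (-(c * t)) := by
    rw [gaussianPDFReal, NNReal.coe_one, mul_one, sub_zero, sq_sqrt (by positivity),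
      sqrt_mul zero_le_two]
    ring_nf
  have h_rpow : t ^ (1 / 2 - 1 : ℝ) = (√t)⁻¹ := by
    rw [sqrt_eq_rpow, ← rpow_neg ht.le]
    norm_num
  rw [h_pdf, h_rpow, sqrt_mul (by positivity) t, sqrt_mul zero_le_two, sqrt_div hc.le]
  field_simp
  rw [sq_sqrt hc.le, sq_sqrt zero_le_two]
  ring

end GaussianTail

section ErlangTail

/-- The survival function `t ↦ P(g > t)`, `t ≥ 0`, of the Gamma distribution with shape `n + 1` and
scale `1`. The shape is shifted by one so that it is positive for every `n`. -/
noncomputable def erlangTail (n : ℕ) (t : ℝ) : ℝ :=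
  exp (-t) * ∑ i ∈ Finset.range (n + 1), t ^ i / i !

theorem erlangTail_zero_right (n : ℕ) : erlangTail n 0 = 1 := by
  simp [erlangTail, Finset.sum_range_succ']

theorem erlangTail_succ (n : ℕ) (t : ℝ) :
    erlangTail (n + 1) t = erlangTail n t + t ^ (n + 1) * exp (-t) / (n + 1)! := by
  rw [erlangTail, erlangTail, Finset.sum_range_succ _ (n + 1)]
  ring

theorem hasDerivAt_erlangTail (n : ℕ) (t : ℝ) :
    HasDerivAt (erlangTail n) (-(t ^ n * exp (-t) / n !)) t := by
  have h_exp : HasDerivAt (fun t => exp (-t)) (-exp (-t)) t := by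
    simpa using (hasDerivAt_neg t).exp
  induction n with
  | zero =>
    have h_eq : erlangTail 0 = fun t => exp (-t) := by
      ext
      simp [erlangTail]
    simpa [h_eq] using h_exp
  | succ n ih =>
    rw [funext (erlangTail_succ n)]
    refine (ih.add (((hasDerivAt_pow (n + 1) t).mul h_exp).div_const _)).congr_deriv ?_
    rw [Nat.factorial_succ]
    push_cast
    field_simp
    ring

theorem tendsto_erlangTail_atTop (n : ℕ) : Tendsto (erlangTail n) atTop (𝓝 0) := by
  have h_term (i : ℕ) : Tendsto (fun t : ℝ => t ^ i * exp (-t) / i !) atTop (𝓝 0) := by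
    simpa only [zero_div] using (tendsto_pow_mul_exp_neg_atTop_nhds_zero i).div_const (i ! : ℝ)
  have h_sum := tendsto_finsetSum (Finset.range (n + 1)) fun i _ => h_term i
  rw [Finset.sum_const_zero] at h_sum
  refine h_sum.congr fun t => ?_
  rw [erlangTail, Finset.mul_sum]
  exact Finset.sum_congr rfl fun i _ => by ring

theorem integrableOn_pow_mul_exp_neg_div_factorial (n : ℕ) :
    IntegrableOn (fun t : ℝ => t ^ n * exp (-t) / n !) (Ioi 0) := by
  have h_gamma := integrableOn_rpow_mul_exp_neg_mul_Ioi n.cast_add_one_pos one_pos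
  simp only [add_sub_cancel_right, rpow_natCast, one_mul] at h_gamma
  exact h_gamma.div_const _

theorem integral_mul_pow_mul_exp_neg_div_factorial {u u' : ℝ → ℝ} {a C : ℝ} (n : ℕ)
    (hu : ∀ t ∈ Ioi 0, HasDerivAt u (u' t) t) (hu_zero : Tendsto u (𝓝[>] 0) (𝓝 a))
    (hu_le : ∀ t ∈ Ioi 0, |u t| ≤ C)
    (hu' : IntegrableOn (fun t => u' t * erlangTail n t) (Ioi 0)) :
    ∫ t in Ioi 0, u t * (t ^ n * exp (-t) / n !) = a + ∫ t in Ioi 0, u' t * erlangTail n t := by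
  have h_int : IntegrableOn (fun t => u t * -(t ^ n * exp (-t) / n !)) (Ioi 0) :=
    (integrableOn_pow_mul_exp_neg_div_factorial n).neg.bdd_mul
      (ContinuousOn.aestronglyMeasurable
        (fun t ht => (hu t ht).continuousAt.continuousWithinAt) measurableSet_Ioi)
      (ae_restrict_of_forall_mem measurableSet_Ioi hu_le)
  have h_zero : Tendsto (u * erlangTail n) (𝓝[>] 0) (𝓝 a) := by
    have h_tail := (hasDerivAt_erlangTail n 0).continuousAt.tendsto.mono_left
      (nhdsWithin_le_nhds (s := Ioi 0))
    have h_mul := hu_zero.mul h_tail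
    rwa [erlangTail_zero_right, mul_one] at h_mul
  have h_infty : Tendsto (u * erlangTail n) atTop (𝓝 0) :=
    bdd_le_mul_tendsto_zero' C ((eventually_gt_atTop 0).mono hu_le) (tendsto_erlangTail_atTop n)
  have h_parts := integral_Ioi_mul_deriv_eq_deriv_mul hu (fun t _ => hasDerivAt_erlangTail n t)
    h_int hu' h_zero h_infty
  simp only [mul_neg, integral_neg] at h_parts
  linear_combination -h_parts

variable {s c : ℝ}

theorem rpow_mul_exp_neg_mul_mul_erlangTail {t : ℝ} (ht : 0 < t) (n : ℕ) :
    t ^ (s - 1) * exp (-(c * t)) * erlangTail n t =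
      ∑ i ∈ Finset.range (n + 1), t ^ (s + i - 1) * exp (-((1 + c) * t)) / i ! := by
  rw [erlangTail, ← mul_assoc, Finset.mul_sum]
  refine Finset.sum_congr rfl fun i _ => ?_
  rw [add_sub_right_comm, rpow_add_natCast ht.ne',
    show -((1 + c) * t) = -(c * t) + -t by ring, exp_add]
  ring

theorem integrableOn_rpow_mul_exp_neg_mul_mul_erlangTail (hs : 0 < s) (hc : 0 < 1 + c) (n : ℕ) :
    IntegrableOn (fun t : ℝ => t ^ (s - 1) * exp (-(c * t)) * erlangTail n t) (Ioi 0) := by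
  refine IntegrableOn.congr_fun ?_
    (fun t ht => (rpow_mul_exp_neg_mul_mul_erlangTail ht n).symm) measurableSet_Ioi
  exact integrable_finsetSum _ fun i _ =>
    (integrableOn_rpow_mul_exp_neg_mul_Ioi (by positivity) hc).div_const _

theorem integral_rpow_mul_exp_neg_mul_mul_erlangTail (hs : 0 < s) (hc : 0 < 1 + c) (n : ℕ) :
    ∫ t in Ioi 0, t ^ (s - 1) * exp (-(c * t)) * erlangTail n t =
      ∑ i ∈ Finset.range (n + 1), (1 / (1 + c)) ^ (s + i) * Gamma (s + i) / i ! := by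
  rw [setIntegral_congr_fun measurableSet_Ioi
      (fun t ht => rpow_mul_exp_neg_mul_mul_erlangTail ht n),
    integral_finsetSum _ fun i _ =>
      (integrableOn_rpow_mul_exp_neg_mul_Ioi (by positivity) hc).div_const _]
  refine Finset.sum_congr rfl fun i _ => ?_
  rw [integral_div, integral_rpow_mul_exp_neg_mul_Ioi (by positivity) hc]

end ErlangTail

theorem integral_gaussQ_sqrt_mul_pow_mul_exp_neg_div_factorial {c : ℝ} (hc : 0 < c) (n : ℕ) :
    ∫ t in Ioi 0, gaussQ √(2 * c * t) * (t ^ n * exp (-t) / n !) =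
      1 / 2 - √(c / π) / 2 *
        ∫ t in Ioi 0, t ^ (1 / 2 - 1 : ℝ) * exp (-(c * t)) * erlangTail n t := by
  have h_zero : Tendsto (fun t => gaussQ √(2 * c * t)) (𝓝[>] 0) (𝓝 (1 / 2)) := by
    have h_cont : Continuous fun t => gaussQ √(2 * c * t) :=
      continuous_gaussQ.comp (by fun_prop)
    simpa [gaussQ_zero] using (h_cont.tendsto 0).mono_left nhdsWithin_le_nhds
  have h_int := (integrableOn_rpow_mul_exp_neg_mul_mul_erlangTail (s := 1 / 2) one_half_pos
    (by positivity : 0 < 1 + c) n).const_mul (-(√(c / π) / 2))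
  rw [integral_mul_pow_mul_exp_neg_div_factorial n (fun t ht => hasDerivAt_gaussQ_sqrt hc ht)
    h_zero (fun t _ => abs_gaussQ_le_one _) (by simpa only [IntegrableOn, mul_assoc] using h_int)]
  simp only [mul_assoc, integral_const_mul]
  ring

/-- For a positive integer `L` and a real `c > 0`,
`∫₀^∞ Q(√(2ct)) t^{L−1} e^{−t}/(L−1)! dt
  = 1/2 − (1/2)·√(c/(1+c))·Σ_{i=0}^{L−1} C(2i,i)/(4(1+c))^i`. -/
theorem gamma_average_of_Q
    (L : ℕ) (hL : 0 < L) (c : ℝ) (hc : 0 < c) :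
    ∫ t in Set.Ioi (0 : ℝ),
        gaussQ (Real.sqrt (2 * c * t)) * t ^ (L - 1) * Real.exp (-t) /
          (Nat.factorial (L - 1) : ℝ)
      = 1 / 2 - 1 / 2 * Real.sqrt (c / (1 + c)) *
          ∑ i ∈ Finset.range L, (Nat.choose (2 * i) i : ℝ) / (4 * (1 + c)) ^ i := by
  obtain ⟨n, rfl⟩ : ∃ n, L = n + 1 := Nat.exists_eq_add_one.2 hL
  have h_sqrt : √(c / π) * √(π / (1 + c)) = √(c / (1 + c)) := by
    rw [← sqrt_mul (by positivity), div_mul_div_cancel₀ pi_ne_zero]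
  have h_one_add : 0 < 1 + c := by positivity
  calc
    _ = ∫ t in Ioi 0, gaussQ √(2 * c * t) * (t ^ n * exp (-t) / n !) := by
      simp only [Nat.add_sub_cancel, mul_assoc, mul_div_assoc]
    _ = 1 / 2 - √(c / π) / 2 *
          ∑ i ∈ Finset.range (n + 1),
            (1 / (1 + c)) ^ (1 / 2 + i : ℝ) * Gamma (1 / 2 + i) / i ! := by
      rw [integral_gaussQ_sqrt_mul_pow_mul_exp_neg_div_factorial hc,
        integral_rpow_mul_exp_neg_mul_mul_erlangTail one_half_pos h_one_add]
    _ = 1 / 2 - √(c / π) / 2 * (√(π / (1 + c)) *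
          ∑ i ∈ Finset.range (n + 1), ((2 * i).choose i : ℝ) / (4 * (1 + c)) ^ i) := by
      simp only [rpow_half_add_nat_mul_Gamma_div_factorial h_one_add, Finset.mul_sum]
    _ = _ := by
      rw [← h_sqrt]
      ring
end

section
/- Let γ_i > 0 and γ_n > 0 be real numbers and k a natural number. For every real x > 0, the function h(x) = x · ((γ_i + γ_n·x²)/(4x³))^k · (x³/(x³ + γ_i + γ_n·x²))^{k + 1/2} is differentiable at x with derivative h′(x) = (1/8) · (x³ + γ_i + γ_n·x²)^{−(k + 3/2)} · ((γ_i + γ_n·x²)/4)^{k − 1} · [ (2 − 2k)·γ_n·x^{13/2} + 3·γ_n²·x^{11/2} + (2 − 6k)·γ_i·x^{9/2} + 8·γ_i·γ_n·x^{7/2} + 5·γ_i²·x^{3/2} ], where the exponent k − 1 is interpreted as an integer power (zpow) of the positive real (γ_i + γ_n·x²)/4. -/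
/-!
With `a y = (γi + γn * y ^ 2) / 4` and `s y = y ^ 3 + γi + γn * y ^ 2`, the powers of `y ^ 3` in the
two quotients cancel up to a square root, so that the summand is the product of powers
`y ^ (5 / 2) * a y ^ k * s y ^ (-(k + 1 / 2))`. Differentiating such a product lowers each exponent
by one, and `8 * x ^ (3 / 2)` times the remaining polynomial factor is the bracket of half-integer
powers.
-/

theorem div_zpow_mul_div_rpow {b s : ℝ} (a : ℝ) (hb : 0 < b) (hs : 0 ≤ s) (k : ℤ) (p : ℝ) :
    (a / b) ^ k * (b / s) ^ ((k : ℝ) + p) = b ^ p * a ^ k * s ^ (-((k : ℝ) + p)) := by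
  have hbk : b ^ k ≠ 0 := (zpow_pos hb k).ne'
  rw [div_zpow, Real.div_rpow hb.le hs, Real.rpow_neg hs, Real.rpow_add hb, Real.rpow_intCast]
  field_simp

theorem mul_div_zpow_mul_div_rpow_eq {y s : ℝ} (a : ℝ) (hy : 0 < y) (hs : 0 ≤ s) (k : ℤ) :
    y * (a / (4 * y ^ 3)) ^ k * (y ^ 3 / s) ^ ((k : ℝ) + 1 / 2) =
      y ^ (5 / 2 : ℝ) * (a / 4) ^ k * s ^ (-((k : ℝ) + 1 / 2)) := by
  have hpow : y * (y ^ 3) ^ (1 / 2 : ℝ) = y ^ (5 / 2 : ℝ) := by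
    rw [← Real.rpow_natCast_mul hy.le, ← Real.rpow_one_add' hy.le (by norm_num)]
    norm_num
  rw [← div_div, mul_assoc, div_zpow_mul_div_rpow _ (pow_pos hy 3) hs, ← hpow]
  ring

theorem hasDerivAt_rpow_mul_zpow_mul_rpow {f g h : ℝ → ℝ} {f' g' h' x : ℝ} {k : ℤ} (p q : ℝ)
    (hf : HasDerivAt f f' x) (hg : HasDerivAt g g' x) (hh : HasDerivAt h h' x)
    (hfx : f x ≠ 0) (hgx : g x ≠ 0 ∨ 0 < k) (hhx : h x ≠ 0) :
    HasDerivAt (fun y => f y ^ p * g y ^ k * h y ^ q)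
      (f x ^ (p - 1) * g x ^ (k - 1) * h x ^ (q - 1) *
        (p * f' * g x * h x + k * f x * g' * h x + q * f x * g x * h')) x := by
  have hfp : f x ^ p = f x ^ (p - 1) * f x := by
    rw [← Real.rpow_add_one hfx, sub_add_cancel]
  have hgk : g x ^ k = g x ^ (k - 1) * g x := by
    have hcase : g x ≠ 0 ∨ k - 1 + 1 ≠ 0 ∨ k - 1 = 0 ∧ (1 : ℤ) = 0 :=
      hgx.imp_right fun hk => Or.inl (by lia)
    simpa only [sub_add_cancel, zpow_one] using zpow_add' hcase
  have hhq : h x ^ q = h x ^ (q - 1) * h x := by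
    rw [← Real.rpow_add_one hhx, sub_add_cancel]
  have hgpow : HasDerivAt (fun y => g y ^ k) (k * g x ^ (k - 1) * g') x :=
    (hasDerivAt_zpow k (g x) (hgx.imp_right le_of_lt)).comp x hg
  refine (((hf.rpow_const (Or.inl hfx)).mul hgpow).mul
    (hh.rpow_const (Or.inl hhx))).congr_deriv ?_
  simp only [Pi.mul_apply]
  rw [hfp, hgk, hhq]
  ring

theorem sum_half_integer_rpow_eq_rpow_three_halves_mul {x : ℝ} (hx : x ≠ 0) (c₅ c₄ c₃ c₂ c₀ : ℝ) :
    c₅ * x ^ (13 / 2 : ℝ) + c₄ * x ^ (11 / 2 : ℝ) + c₃ * x ^ (9 / 2 : ℝ) +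
        c₂ * x ^ (7 / 2 : ℝ) + c₀ * x ^ (3 / 2 : ℝ) =
      x ^ (3 / 2 : ℝ) * (c₅ * x ^ 5 + c₄ * x ^ 4 + c₃ * x ^ 3 + c₂ * x ^ 2 + c₀) := by
  have hpow (n : ℕ) : x ^ (3 / 2 + n : ℝ) = x ^ (3 / 2 : ℝ) * x ^ n :=
    Real.rpow_add_natCast hx _ n
  rw [show (13 / 2 : ℝ) = 3 / 2 + (5 : ℕ) by norm_num,
    show (11 / 2 : ℝ) = 3 / 2 + (4 : ℕ) by norm_num,
    show (9 / 2 : ℝ) = 3 / 2 + (3 : ℕ) by norm_num,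
    show (7 / 2 : ℝ) = 3 / 2 + (2 : ℕ) by norm_num, hpow, hpow, hpow, hpow]
  ring

theorem hasDerivAt_const_add_const_mul_sq (b c x : ℝ) :
    HasDerivAt (fun y : ℝ => b + c * y ^ 2) (2 * c * x) x :=
  (((hasDerivAt_pow 2 x).const_mul c).const_add b).congr_deriv (by norm_num; ring)

theorem hasDerivAt_cube_add_const_add_const_mul_sq (b c x : ℝ) :
    HasDerivAt (fun y : ℝ => y ^ 3 + b + c * y ^ 2) (3 * x ^ 2 + 2 * c * x) x := by
  simpa [Pi.add_def, add_assoc] using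
    (hasDerivAt_pow 3 x).add (hasDerivAt_const_add_const_mul_sq b c x)

theorem deriv_weighted_Psi2_summand_general
    (γi γn : ℝ) (k : ℤ) (x : ℝ) (hx : 0 < x) (hs : 0 < x ^ 3 + γi + γn * x ^ 2)
    (ha : γi + γn * x ^ 2 ≠ 0 ∨ 0 < k) :
    HasDerivAt
      (fun y : ℝ => y * ((γi + γn * y ^ 2) / (4 * y ^ 3)) ^ k *
        (y ^ 3 / (y ^ 3 + γi + γn * y ^ 2)) ^ ((k : ℝ) + 1 / 2))
      (1 / 8 * (x ^ 3 + γi + γn * x ^ 2) ^ (-((k : ℝ) + 3 / 2)) *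
        ((γi + γn * x ^ 2) / 4) ^ (k - 1) *
        ((2 - 2 * (k : ℝ)) * γn * x ^ ((13 : ℝ) / 2) +
          3 * γn ^ 2 * x ^ ((11 : ℝ) / 2) +
          (2 - 6 * (k : ℝ)) * γi * x ^ ((9 : ℝ) / 2) +
          8 * γi * γn * x ^ ((7 : ℝ) / 2) +
          5 * γi ^ 2 * x ^ ((3 : ℝ) / 2))) x := by
  have hs' := hasDerivAt_cube_add_const_add_const_mul_sq γi γn x
  have hprod := hasDerivAt_rpow_mul_zpow_mul_rpow (5 / 2) (-((k : ℝ) + 1 / 2)) (hasDerivAt_id' x)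
    ((hasDerivAt_const_add_const_mul_sq γi γn x).div_const 4) hs' hx.ne'
    (ha.imp_left fun h => div_ne_zero h four_ne_zero) hs.ne'
  refine (hprod.congr_of_eventuallyEq ?_).congr_deriv ?_
  · filter_upwards [lt_mem_nhds hx, hs'.continuousAt.eventually_const_lt hs] with y hy hsy
    exact mul_div_zpow_mul_div_rpow_eq _ hy hsy.le k
  · rw [sum_half_integer_rpow_eq_rpow_three_halves_mul hx.ne',
      show (5 / 2 - 1 : ℝ) = 3 / 2 by norm_num,
      show -((k : ℝ) + 1 / 2) - 1 = -((k : ℝ) + 3 / 2) by ring]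
    ring

/-- For `γ_i > 0`, `γ_n > 0`, a natural `k`, and `x > 0`, the function
`h(x) = x·((γ_i + γ_n x²)/(4x³))^k·(x³/(x³ + γ_i + γ_n x²))^{k+1/2}` is differentiable
at `x` with derivative
`h′(x) = (1/8)·(x³ + γ_i + γ_n x²)^{−(k+3/2)}·((γ_i + γ_n x²)/4)^{k−1}·
  [(2−2k)γ_n x^{13/2} + 3γ_n² x^{11/2} + (2−6k)γ_i x^{9/2} + 8γ_iγ_n x^{7/2} + 5γ_i² x^{3/2}]`,
where `k − 1` is an integer power (zpow) of the positive real `(γ_i + γ_n x²)/4`. -/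
theorem deriv_weighted_Psi2_summand
    (γi γn : ℝ) (hγi : 0 < γi) (hγn : 0 < γn) (k : ℕ) (x : ℝ) (hx : 0 < x) :
    HasDerivAt
      (fun y : ℝ => y * ((γi + γn * y ^ 2) / (4 * y ^ 3)) ^ k *
        (y ^ 3 / (y ^ 3 + γi + γn * y ^ 2)) ^ ((k : ℝ) + 1 / 2))
      (1 / 8 * (x ^ 3 + γi + γn * x ^ 2) ^ (-((k : ℝ) + 3 / 2)) *
        ((γi + γn * x ^ 2) / 4) ^ ((k : ℤ) - 1) *
        ((2 - 2 * (k : ℝ)) * γn * x ^ ((13 : ℝ) / 2) +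
          3 * γn ^ 2 * x ^ ((11 : ℝ) / 2) +
          (2 - 6 * (k : ℝ)) * γi * x ^ ((9 : ℝ) / 2) +
          8 * γi * γn * x ^ ((7 : ℝ) / 2) +
          5 * γi ^ 2 * x ^ ((3 : ℝ) / 2))) x := by
  simpa only [zpow_natCast, Int.cast_natCast] using
    deriv_weighted_Psi2_summand_general γi γn k x hx (by positivity) (Or.inl (by positivity))
end
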